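/- Let γ, ε ∈ ℝ with either (γ ≥ 1 and ε > 0) or (γ < −1 and ε < 0). Then there exists a C² function u : ℝ² → ℝ that satisfies L_{γ,ε}[u] = 0 at every point of ℝ² and is not affine linear; that is, the equation L_{γ,ε}[u] = 0 does not have the Bernstein property in these parameter ranges. -/

import Mathlib

/-- First partial derivative in the `x`-direction. -/
noncomputable def ux (u : ℝ × ℝ → ℝ) (p : ℝ × ℝ) : ℝ := fderiv ℝ u p (1, 0)

/-- First partial derivative in the `y`-direction. -/
noncomputable def uy (u : ℝ × ℝ → ℝ) (p : ℝ × ℝ) : ℝ := fderiv ℝ u p (0, 1)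

/-- Second partial derivative `u_xx`. -/
noncomputable def uxx (u : ℝ × ℝ → ℝ) (p : ℝ × ℝ) : ℝ := fderiv ℝ (ux u) p (1, 0)

/-- Second partial derivative `u_xy`. -/
noncomputable def uxy (u : ℝ × ℝ → ℝ) (p : ℝ × ℝ) : ℝ := fderiv ℝ (ux u) p (0, 1)

/-- Second partial derivative `u_yy`. -/
noncomputable def uyy (u : ℝ × ℝ → ℝ) (p : ℝ × ℝ) : ℝ := fderiv ℝ (uy u) p (0, 1)

/-- The operator `L_{γ,ε}`. -/
noncomputable def Lop (γ ε : ℝ) (u : ℝ × ℝ → ℝ) (p : ℝ × ℝ) : ℝ :=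
  (2 * ε + (γ + 1) * ux u p ^ 2 + (γ - 1) * uy u p ^ 2) * uxx u p
    + 4 * ux u p * uy u p * uxy u p
    + (2 * ε + (γ - 1) * ux u p ^ 2 + (γ + 1) * uy u p ^ 2) * uyy u p

open Filter Topology Set

/-- A proper local homeomorphism of a connected space with one singleton fibre is bijective. -/
lemma bij_of_proper {X Y : Type*} [TopologicalSpace X] [T2Space X] [TopologicalSpace Y]
    [PreconnectedSpace Y] (f : X → Y)
    (hl : IsLocalHomeomorph f) (hp : IsClosedMap f) (x0 : X) (h0 : ∀ x, f x = f x0 → x = x0) :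
    Function.Bijective f := by
  set S : Set Y := {y | ∃! x, f x = y} with hS
  have hopenmap := hl.isOpenMap
  have hSo : IsOpen S := by
    rw [isOpen_iff_mem_nhds]
    rintro y ⟨x, hx, hux⟩
    obtain ⟨e, hxe, rfl⟩ := hl x
    have h1 : e '' e.source ∈ 𝓝 y := by
      rw [← hx]
      exact hopenmap.image_mem_nhds (e.open_source.mem_nhds hxe)
    have h2 : (e '' (e.sourceᶜ))ᶜ ∈ 𝓝 y := by
      apply (hp _ e.open_source.isClosed_compl).isOpen_compl.mem_nhds
      rintro ⟨x', hx', hxy⟩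
      exact hx' ((hux x' hxy) ▸ hxe)
    filter_upwards [h1, h2] with z hz1 hz2
    obtain ⟨w, hw, hwz⟩ := hz1
    refine ⟨w, hwz, fun w' hw' => ?_⟩
    have : w' ∈ e.source := by
      by_contra hcon
      exact hz2 ⟨w', hcon, hw'⟩
    exact e.injOn this hw (by rw [hw', hwz])
  have hRo : IsClosed (range f) := hp.isClosed_range
  have hRange : range f = univ :=
    IsClopen.eq_univ ⟨hRo, hopenmap.isOpen_range⟩ ⟨f x0, x0, rfl⟩
  have hSc : IsClosed S := by
    rw [← isOpen_compl_iff, isOpen_iff_mem_nhds]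
    intro y hy
    obtain ⟨x, hx⟩ : y ∈ range f := by rw [hRange]; trivial
    have : ∃ x', f x' = y ∧ x' ≠ x := by
      by_contra hcon
      push Not at hcon
      exact hy ⟨x, hx, hcon⟩
    obtain ⟨x', hx', hne⟩ := this
    obtain ⟨U, V, hU, hV, hxU, hxV, hd⟩ := t2_separation hne
    have h1 : f '' U ∈ 𝓝 y := hx' ▸ hopenmap.image_mem_nhds (hU.mem_nhds hxU)
    have h2 : f '' V ∈ 𝓝 y := hx ▸ hopenmap.image_mem_nhds (hV.mem_nhds hxV)
    filter_upwards [h1, h2] with z hz1 hz2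
    obtain ⟨a, ha, haz⟩ := hz1
    obtain ⟨b, hb, hbz⟩ := hz2
    rintro ⟨c, hc, huc⟩
    have : a = b := (huc a haz).trans (huc b hbz).symm
    exact (Set.disjoint_left.mp hd ha) (this ▸ hb)
  have hSu : S = univ := IsClopen.eq_univ ⟨hSc, hSo⟩ ⟨f x0, x0, rfl, h0⟩
  constructor
  · intro a b hab
    have : f b ∈ S := by rw [hSu]; trivial
    exact this.unique hab rfl
  · intro y
    have : y ∈ S := by rw [hSu]; trivial
    exact this.exists

lemma isUnit_of_det (L : ℝ × ℝ →L[ℝ] ℝ × ℝ) (m n n' o : ℝ) (h1 : L (1,0) = (m, n'))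
    (h2 : L (0,1) = (n, o)) (hd : m * o - n * n' ≠ 0) : ∃ e : (ℝ × ℝ) ≃L[ℝ] ℝ × ℝ, (e : ℝ × ℝ →L[ℝ] ℝ × ℝ) = L := by
  have hinj : Function.Injective L := by
    rw [injective_iff_map_eq_zero]
    rintro ⟨a, b⟩ hab
    have : ((a, b) : ℝ × ℝ) = a • (1, 0) + b • (0, 1) := by simp
    rw [this, map_add, map_smul, map_smul, h1, h2] at hab
    simp only [Prod.smul_mk, smul_eq_mul, Prod.mk_add_mk, Prod.mk_eq_zero] at hab
    obtain ⟨e1, e2⟩ := hab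
    have ha : a = 0 := by
      have : (m * o - n * n') * a = 0 := by linear_combination o * e1 - n * e2
      exact (mul_eq_zero.mp this).resolve_left hd
    have hb : b = 0 := by
      have : (m * o - n * n') * b = 0 := by linear_combination m * e2 - n' * e1
      exact (mul_eq_zero.mp this).resolve_left hd
    simp [ha, hb]
  refine ⟨(LinearEquiv.ofInjectiveEndo L.toLinearMap hinj).toContinuousLinearEquiv, ?_⟩
  ext <;> rfl

/-- Global inversion. -/
lemma global_inverse (G : ℝ × ℝ → ℝ × ℝ) (hG : ContDiff ℝ 1 G)
    (hE : ∀ z, ∃ e : (ℝ × ℝ) ≃L[ℝ] ℝ × ℝ, (e : ℝ × ℝ →L[ℝ] ℝ × ℝ) = fderiv ℝ G z)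
    (hT : Tendsto G (cocompact _) (cocompact _)) (h0 : ∀ z, G z = G 0 → z = 0) :
    ∃ Γ : ℝ × ℝ → ℝ × ℝ, ContDiff ℝ 1 Γ ∧ (∀ x, G (Γ x) = x) ∧ (∀ z, Γ (G z) = z) := by
  have hl : IsLocalHomeomorph G := by
    apply IsLocalHomeomorph.mk
    intro z
    obtain ⟨e, he⟩ := hE z
    have hs : HasStrictFDerivAt G (e : ℝ × ℝ →L[ℝ] ℝ × ℝ) z := by
      rw [he]; exact hG.contDiffAt.hasStrictFDerivAt (by norm_num)
    exact ⟨hs.toOpenPartialHomeomorph G, hs.mem_toOpenPartialHomeomorph_source, fun _ _ => rfl⟩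
  have hp : IsProperMap G := isProperMap_iff_tendsto_cocompact.mpr ⟨hG.continuous, hT⟩
  have hb := bij_of_proper G hl hp.isClosedMap 0 h0
  let e : (ℝ × ℝ) ≃ₜ (ℝ × ℝ) :=
    (Equiv.ofBijective G hb).toHomeomorphOfContinuousOpen hG.continuous hl.isOpenMap
  have heG : ∀ z, e z = G z := fun z => rfl
  refine ⟨e.symm, ?_, fun x => ?_, fun z => ?_⟩
  · rw [contDiff_iff_contDiffAt]
    intro x
    obtain ⟨e', he'⟩ := hE (e.symm x)
    apply e.toOpenPartialHomeomorph.contDiffAt_symm (f₀' := e') (by simp)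
    · change HasFDerivAt G _ (e.symm x)
      rw [he']
      exact (hG.differentiable (by norm_num) _).hasFDerivAt
    · exact hG.contDiffAt
  · rw [← heG, e.apply_symm_apply]
  · rw [← heG, e.symm_apply_apply]

/-- Profile function data. -/
structure Profile (γ ε : ℝ) (H H1 H2 : ℝ → ℝ) : Prop where
  d0 : ∀ s, 0 ≤ s → HasDerivAt H (H1 s) s
  d1 : ∀ s, 0 ≤ s → HasDerivAt H1 (H2 s) s
  c2 : ContinuousOn H2 (Ici 0)
  ode : ∀ s, 0 ≤ s → s * (2*ε + (γ-1)*s) * H2 s + (6*ε + (3*γ-2)*s) * H1 s - H s = 0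
  pos : ∀ s, 0 ≤ s → 0 < H s
  posJ : ∀ s, 0 ≤ s → 0 < H s - s * H1 s
  posK : ∀ s, 0 ≤ s → 0 < H s + 2 * s * H1 s
  grow : Tendsto (fun s => s * H s ^ 2) atTop atTop

lemma hasFDerivAt_comp_sq (f : ℝ → ℝ) (f' : ℝ) (z : ℝ × ℝ)
    (h : HasDerivAt f f' (z.1^2 + z.2^2)) :
    HasFDerivAt (fun z : ℝ × ℝ => f (z.1^2+z.2^2))
      ((2 * z.1 * f') • ContinuousLinearMap.fst ℝ ℝ ℝ + (2 * z.2 * f') • ContinuousLinearMap.snd ℝ ℝ ℝ) z := by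
  have h1 : HasFDerivAt (fun z : ℝ × ℝ => z.1^2+z.2^2) _ z :=
    ((hasFDerivAt_fst (𝕜 := ℝ) (p := z)).pow 2).add ((hasFDerivAt_snd (𝕜 := ℝ) (p := z)).pow 2)
  have := h.comp_hasFDerivAt z h1
  refine this.congr_fderiv ?_
  ext <;> simp <;> ring

section core
variable {γ ε : ℝ} {H H1 H2 : ℝ → ℝ}

def Gmap (H H1 : ℝ → ℝ) (z : ℝ × ℝ) : ℝ × ℝ :=
  (2 * z.1 * (H (z.1^2+z.2^2) + (z.1^2-z.2^2) * H1 (z.1^2+z.2^2)),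
   2 * z.2 * (-H (z.1^2+z.2^2) + (z.1^2-z.2^2) * H1 (z.1^2+z.2^2)))

def Mpp (H H1 H2 : ℝ → ℝ) (z : ℝ × ℝ) : ℝ :=
  2 * H (z.1^2+z.2^2) + 2 * (z.1^2-z.2^2) * H1 (z.1^2+z.2^2) + 8 * z.1^2 * H1 (z.1^2+z.2^2)
    + 4 * z.1^2 * (z.1^2-z.2^2) * H2 (z.1^2+z.2^2)

def Mqq (H H1 H2 : ℝ → ℝ) (z : ℝ × ℝ) : ℝ :=
  -2 * H (z.1^2+z.2^2) + 2 * (z.1^2-z.2^2) * H1 (z.1^2+z.2^2) - 8 * z.2^2 * H1 (z.1^2+z.2^2)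
    + 4 * z.2^2 * (z.1^2-z.2^2) * H2 (z.1^2+z.2^2)

def Mpq (H2 : ℝ → ℝ) (z : ℝ × ℝ) : ℝ :=
  4 * z.1 * z.2 * (z.1^2-z.2^2) * H2 (z.1^2+z.2^2)

def DG (H H1 H2 : ℝ → ℝ) (z : ℝ × ℝ) : ℝ × ℝ →L[ℝ] ℝ × ℝ :=
  (Mpp H H1 H2 z • ContinuousLinearMap.fst ℝ ℝ ℝ + Mpq H2 z • ContinuousLinearMap.snd ℝ ℝ ℝ).prod
  (Mpq H2 z • ContinuousLinearMap.fst ℝ ℝ ℝ + Mqq H H1 H2 z • ContinuousLinearMap.snd ℝ ℝ ℝ)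

lemma Gmap_hasFDerivAt (P : Profile γ ε H H1 H2) (z : ℝ × ℝ) :
    HasFDerivAt (Gmap H H1) (DG H H1 H2 z) z := by
  have hs : 0 ≤ z.1^2 + z.2^2 := by positivity
  have k0 := hasFDerivAt_comp_sq H _ z (P.d0 _ hs)
  have k1 := hasFDerivAt_comp_sq H1 _ z (P.d1 _ hs)
  have a1 := hasFDerivAt_fst (𝕜 := ℝ) (p := z)
  have a2 := hasFDerivAt_snd (𝕜 := ℝ) (p := z)
  have d := (a1.pow 2).sub (a2.pow 2)
  have g1 := (a1.const_mul 2).mul (k0.add (d.mul k1))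
  have g2 := (a2.const_mul 2).mul (k0.neg.add (d.mul k1))
  refine (g1.prodMk g2).congr_fderiv ?_
  unfold DG Mpp Mqq Mpq
  ext <;> simp <;> ring

lemma phi_hasFDerivAt (P : Profile γ ε H H1 H2) (z : ℝ × ℝ) :
    HasFDerivAt (fun z : ℝ × ℝ => (z.1^2-z.2^2) * H (z.1^2+z.2^2))
      ((Gmap H H1 z).1 • ContinuousLinearMap.fst ℝ ℝ ℝ +
        (Gmap H H1 z).2 • ContinuousLinearMap.snd ℝ ℝ ℝ) z := by
  have hs : 0 ≤ z.1^2 + z.2^2 := by positivity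
  have k0 := hasFDerivAt_comp_sq H _ z (P.d0 _ hs)
  have a1 := hasFDerivAt_fst (𝕜 := ℝ) (p := z)
  have a2 := hasFDerivAt_snd (𝕜 := ℝ) (p := z)
  have d := (a1.pow 2).sub (a2.pow 2)
  refine (d.mul k0).congr_fderiv ?_
  unfold Gmap
  ext <;> simp <;> ring

lemma Gmap_contDiff (P : Profile γ ε H H1 H2) : ContDiff ℝ 1 (Gmap H H1) := by
  rw [contDiff_one_iff_hasFDerivAt]
  refine ⟨DG H H1 H2, ?_, Gmap_hasFDerivAt P⟩
  have hs : Continuous (fun z : ℝ × ℝ => z.1^2 + z.2^2) := by fun_prop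
  have hn : ∀ z : ℝ × ℝ, z.1^2 + z.2^2 ∈ Ici (0:ℝ) := fun z => by
    rw [mem_Ici]; positivity
  have c0 : Continuous (fun z : ℝ × ℝ => H (z.1^2 + z.2^2)) :=
    ContinuousOn.comp_continuous (s := Ici 0)
      (fun s hs => (P.d0 s hs).continuousAt.continuousWithinAt) hs hn
  have c1 : Continuous (fun z : ℝ × ℝ => H1 (z.1^2 + z.2^2)) :=
    ContinuousOn.comp_continuous (s := Ici 0)
      (fun s hs => (P.d1 s hs).continuousAt.continuousWithinAt) hs hn
  have c2 : Continuous (fun z : ℝ × ℝ => H2 (z.1^2 + z.2^2)) :=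
    P.c2.comp_continuous hs hn
  have e1 : Continuous (Mpp H H1 H2) := by
    have : ∀ f g k : ℝ × ℝ → ℝ, Continuous f → Continuous g → Continuous k →
      Continuous (fun z : ℝ × ℝ => 2 * f z + 2 * (z.1^2-z.2^2) * g z + 8 * z.1^2 * g z
        + 4 * z.1^2 * (z.1^2-z.2^2) * k z) := by intros; fun_prop
    exact this _ _ _ c0 c1 c2
  have e2 : Continuous (Mqq H H1 H2) := by
    have : ∀ f g k : ℝ × ℝ → ℝ, Continuous f → Continuous g → Continuous k →
      Continuous (fun z : ℝ × ℝ => -2 * f z + 2 * (z.1^2-z.2^2) * g z - 8 * z.2^2 * g z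
        + 4 * z.2^2 * (z.1^2-z.2^2) * k z) := by intros; fun_prop
    exact this _ _ _ c0 c1 c2
  have e3 : Continuous (Mpq H2) := by
    have : ∀ k : ℝ × ℝ → ℝ, Continuous k →
      Continuous (fun z : ℝ × ℝ => 4 * z.1 * z.2 * (z.1^2-z.2^2) * k z) := by intros; fun_prop
    exact this _ c2
  have hD : DG H H1 H2 = fun z =>
      Mpp H H1 H2 z • (ContinuousLinearMap.fst ℝ ℝ ℝ).prod (0 : ℝ × ℝ →L[ℝ] ℝ)
      + Mpq H2 z • (ContinuousLinearMap.snd ℝ ℝ ℝ).prod (ContinuousLinearMap.fst ℝ ℝ ℝ)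
      + Mqq H H1 H2 z • (0 : ℝ × ℝ →L[ℝ] ℝ).prod (ContinuousLinearMap.snd ℝ ℝ ℝ) := by
    funext z
    ext <;> simp [DG]
  rw [hD]
  exact ((e1.smul continuous_const).add (e3.smul continuous_const)).add (e2.smul continuous_const)

lemma lin_pde (P : Profile γ ε H H1 H2) (z : ℝ × ℝ) :
    (2*ε+(γ+1)*z.1^2+(γ-1)*z.2^2) * Mqq H H1 H2 z - 4 * z.1 * z.2 * Mpq H2 z
      + (2*ε+(γ-1)*z.1^2+(γ+1)*z.2^2) * Mpp H H1 H2 z = 0 := by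
  have h := P.ode (z.1^2 + z.2^2) (by positivity)
  unfold Mqq Mpp Mpq
  linear_combination 4 * (z.1^2-z.2^2) * h

lemma det_neg (P : Profile γ ε H H1 H2) (hγ : (1 ≤ γ ∧ 0 < ε) ∨ (γ < -1 ∧ ε < 0)) (z : ℝ × ℝ) :
    Mpp H H1 H2 z * Mqq H H1 H2 z - Mpq H2 z * Mpq H2 z ≠ 0 := by
  have hs : 0 ≤ z.1^2 + z.2^2 := by positivity
  have h := P.ode _ hs
  have hp := P.pos _ hs
  have hJ := P.posJ _ hs
  have hK := P.posK _ hs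
  unfold Mqq Mpp Mpq
  set s := z.1^2 + z.2^2 with hsd
  rcases hs.eq_or_lt with h0 | h0
  · have z1 : z.1 = 0 := by nlinarith [sq_nonneg z.1, sq_nonneg z.2]
    have z2 : z.2 = 0 := by nlinarith [sq_nonneg z.1, sq_nonneg z.2]
    rw [z1, z2]
    have : H s ≠ 0 := hp.ne'
    ring_nf
    simpa using this
  · set R := 2 * H s + 10 * s * H1 s + 4 * s^2 * H2 s with hR
    have hb : (2*ε+(γ-1)*s) * R = 2 * (2*ε+(γ+1)*s) * (H s - s * H1 s) := by
      rw [hR]; linear_combination 4 * s * h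
    have hRpos : 0 < R := by
      rcases hγ with ⟨h1, h2⟩ | ⟨h1, h2⟩
      · have b1 : 0 < 2*ε+(γ-1)*s := by nlinarith
        have b2 : 0 < 2*ε+(γ+1)*s := by nlinarith
        have : 0 < (2*ε+(γ-1)*s) * R := by rw [hb]; positivity
        exact (pos_iff_pos_of_mul_pos this).mp b1
      · have b1 : 0 < -(2*ε+(γ-1)*s) := by nlinarith
        have b2 : 0 < -(2*ε+(γ+1)*s) := by nlinarith
        have : 0 < -(2*ε+(γ-1)*s) * R := by
          have : -(2*ε+(γ-1)*s) * R = 2 * (-(2*ε+(γ+1)*s)) * (H s - s * H1 s) := by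
            linear_combination -hb
          rw [this]; positivity
        exact (pos_iff_pos_of_mul_pos this).mp b1
    intro hdet
    have key : 2 * (H s - s * H1 s) * R * (z.1^2-z.2^2)^2
        + 16 * (H s + 2 * s * H1 s)^2 * (z.1*z.2)^2 = 0 := by
      have : s^2 * (_ : ℝ) = s^2 * 0 := congrArg (fun t => s^2 * t) hdet
      rw [hR]
      have e : z.2^2 = s - z.1^2 := by rw [hsd]; ring
      simp only [mul_pow, e] at this ⊢
      ring_nf at this ⊢
      simp only [e] at this ⊢
      linear_combination -this
    have n1 : 0 ≤ 2 * (H s - s * H1 s) * R * (z.1^2-z.2^2)^2 := by positivity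
    have n2 : 0 ≤ 16 * (H s + 2 * s * H1 s)^2 * (z.1*z.2)^2 := by positivity
    have m1 : 2 * (H s - s * H1 s) * R * (z.1^2-z.2^2)^2 = 0 := by linarith
    have m2 : 16 * (H s + 2 * s * H1 s)^2 * (z.1*z.2)^2 = 0 := by linarith
    have m1' : (z.1^2-z.2^2)^2 = 0 := by
      refine (mul_eq_zero.mp m1).resolve_left (by positivity)
    have m2' : (z.1*z.2)^2 = 0 := by
      refine (mul_eq_zero.mp m2).resolve_left (by positivity)
    have : s^2 = 0 := by rw [hsd]; linear_combination m1' + 4 * m2'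
    have : 0 < s^2 := by positivity
    linarith

lemma Gmap_bound (P : Profile γ ε H H1 H2) (z : ℝ × ℝ) :
    (z.1^2+z.2^2) * H (z.1^2+z.2^2)^2 ≤ (Gmap H H1 z).1^2 + (Gmap H H1 z).2^2 := by
  have hs : 0 ≤ z.1^2 + z.2^2 := by positivity
  have hp := P.pos _ hs
  have hK := P.posK _ hs
  unfold Gmap
  dsimp only
  obtain ⟨x, y⟩ := z
  dsimp only at *
  set s := x^2 + y^2 with hsd
  rcases hs.eq_or_lt with h0 | h0
  · rw [← h0]; simp; positivity
  · have h2 : H s ^2 ≤ 4 * (H s + s * H1 s)^2 := by nlinarith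
    refine le_of_mul_le_mul_left ?_ h0
    have : s * ((2 * x * (H s + (x ^ 2 - y ^ 2) * H1 s)) ^ 2 + (2 * y * (-H s + (x ^ 2 - y ^ 2) * H1 s)) ^ 2)
       = 4 * (H s + s * H1 s)^2 * (x^2-y^2)^2 + 4 * H s ^2 * (2*x*y)^2 := by
      rw [show (2 * x * (H s + (x ^ 2 - y ^ 2) * H1 s)) ^ 2 + (2 * y * (-H s + (x ^ 2 - y ^ 2) * H1 s)) ^ 2
        = 4 * s * H s ^2 + 8 * (x^2-y^2)^2 * H s * H1 s + 4 * s * (x^2-y^2)^2 * H1 s^2 by rw [hsd]; ring]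
      have : (2*x*y)^2 = s^2 - (x^2-y^2)^2 := by rw [hsd]; ring
      rw [this]; ring
    rw [this]
    have e : s * (s * H s^2) = H s^2 * (x^2-y^2)^2 + H s^2 * (2*x*y)^2 := by rw [hsd]; ring
    rw [e]
    have n1 := mul_le_mul_of_nonneg_right h2 (sq_nonneg (x^2-y^2))
    have n2 : 0 ≤ H s ^ 2 * (2*x*y)^2 := by positivity
    linarith

lemma Gmap_tendsto (P : Profile γ ε H H1 H2) :
    Tendsto (Gmap H H1) (cocompact _) (cocompact _) := by
  have h1 : Tendsto (fun z : ℝ × ℝ => z.1^2 + z.2^2) (cocompact _) atTop := by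
    have : Tendsto (fun z : ℝ × ℝ => ‖z‖^2) (cocompact _) atTop :=
      (tendsto_pow_atTop (by norm_num)).comp (tendsto_norm_cocompact_atTop (E := ℝ × ℝ))
    refine tendsto_atTop_mono (fun z => ?_) this
    rcases max_cases ‖z.1‖ ‖z.2‖ with h | h <;> rw [Prod.norm_def, h.1, Real.norm_eq_abs, sq_abs]
    · nlinarith [sq_nonneg z.2]
    · nlinarith [sq_nonneg z.1]
  have h2 := P.grow.comp h1
  have h3 : Tendsto (fun z => 2 * ‖Gmap H H1 z‖^2) (cocompact _) atTop := by
    refine tendsto_atTop_mono (fun z => ?_) h2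
    refine (Gmap_bound P z).trans ?_
    have a1 := norm_fst_le (Gmap H H1 z)
    have a2 := norm_snd_le (Gmap H H1 z)
    rw [Real.norm_eq_abs] at a1 a2
    have b1 := pow_le_pow_left₀ (abs_nonneg _) a1 2
    have b2 := pow_le_pow_left₀ (abs_nonneg _) a2 2
    rw [sq_abs] at b1 b2
    linarith
  rw [← Metric.cobounded_eq_cocompact (α := ℝ × ℝ), ← tendsto_norm_atTop_iff_cobounded, Metric.cobounded_eq_cocompact]
  rw [tendsto_atTop] at h3 ⊢
  intro b
  filter_upwards [h3 (2 * b^2)] with z hz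
  have : b^2 ≤ ‖Gmap H H1 z‖^2 := by linarith
  exact (abs_le_of_sq_le_sq' this (norm_nonneg _)).2

theorem main_of_profile (P : Profile γ ε H H1 H2) (hγ : (1 ≤ γ ∧ 0 < ε) ∨ (γ < -1 ∧ ε < 0)) :
    ∃ u : ℝ × ℝ → ℝ, ContDiff ℝ 2 u ∧
      (∀ p : ℝ × ℝ, Lop γ ε u p = 0) ∧
      ¬ ∃ a b c : ℝ, ∀ x y : ℝ, u (x, y) = a * x + b * y + c := by
  have hDG := Gmap_hasFDerivAt P
  obtain ⟨Γ, hΓ, hGΓ, hΓG⟩ := global_inverse (Gmap H H1) (Gmap_contDiff P) (fun z => by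
      rw [(hDG z).fderiv]
      exact isUnit_of_det _ (Mpp H H1 H2 z) (Mpq H2 z) (Mpq H2 z) (Mqq H H1 H2 z) (by simp [DG]) (by simp [DG])
        (det_neg P hγ z)) (Gmap_tendsto P) (fun z hz => by
      have h0 : Gmap H H1 0 = 0 := by simp [Gmap]
      have hb := Gmap_bound P z
      rw [hz, h0] at hb
      have hp := P.pos (z.1^2+z.2^2) (by positivity)
      have : z.1^2+z.2^2 ≤ 0 := by
        by_contra hc
        push Not at hc
        have : 0 < (z.1^2+z.2^2) * H (z.1^2+z.2^2)^2 := by positivity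
        simp at hb
        linarith
      ext
      · show z.1 = 0
        nlinarith [sq_nonneg z.1, sq_nonneg z.2]
      · show z.2 = 0
        nlinarith [sq_nonneg z.1, sq_nonneg z.2])
  set φ : ℝ × ℝ → ℝ := fun z => (z.1^2-z.2^2) * H (z.1^2+z.2^2) with hφ
  set u : ℝ × ℝ → ℝ := fun x => x.1 * (Γ x).1 + x.2 * (Γ x).2 - φ (Γ x) with hu
  have hΓd : ∀ x, HasFDerivAt Γ (fderiv ℝ Γ x) x := fun x => (hΓ.differentiable (by norm_num) x).hasFDerivAt
  have hud : ∀ x, HasFDerivAt u ((Γ x).1 • ContinuousLinearMap.fst ℝ ℝ ℝ + (Γ x).2 • ContinuousLinearMap.snd ℝ ℝ ℝ) x := by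
    intro x
    have a1 := hasFDerivAt_fst (𝕜 := ℝ) (p := x)
    have a2 := hasFDerivAt_snd (𝕜 := ℝ) (p := x)
    have p := (phi_hasFDerivAt P (Γ x)).comp x (hΓd x)
    have t := ((a1.mul (hΓd x).fst).add (a2.mul (hΓd x).snd)).sub p
    refine t.congr_fderiv ?_
    rw [hGΓ]
    ext <;> simp
  have hux : ux u = fun x => (Γ x).1 := by
    funext x; simp [ux, (hud x).fderiv]
  have huy : uy u = fun x => (Γ x).2 := by
    funext x; simp [uy, (hud x).fderiv]
  refine ⟨u, ?_, ?_, ?_⟩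
  · have : ContDiff ℝ ((1:ℕ) + 1) u := by
      rw [contDiff_succ_iff_hasFDerivAt]
      refine ⟨_, ?_, hud⟩
      have := hΓ.fst
      have := hΓ.snd
      norm_num
      fun_prop
    norm_num at this
    exact this
  · intro x
    have hxx : uxx u x = (fderiv ℝ Γ x (1,0)).1 := by
      simp [uxx, hux, (hΓd x).fst.fderiv]
    have hxy : uxy u x = (fderiv ℝ Γ x (0,1)).1 := by
      simp [uxy, hux, (hΓd x).fst.fderiv]
    have hyy : uyy u x = (fderiv ℝ Γ x (0,1)).2 := by
      simp [uyy, huy, (hΓd x).snd.fderiv]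
    have hcomp : (DG H H1 H2 (Γ x)).comp (fderiv ℝ Γ x) = ContinuousLinearMap.id ℝ _ := by
      have h1 := (hDG (Γ x)).comp x (hΓd x)
      have h2 : Gmap H H1 ∘ Γ = id := funext hGΓ
      rw [h2] at h1
      exact h1.unique (hasFDerivAt_id x)
    have e1 := congrArg (fun L => L ((1:ℝ),(0:ℝ))) hcomp
    have e2 := congrArg (fun L => L ((0:ℝ),(1:ℝ))) hcomp
    simp only [DG, ContinuousLinearMap.comp_apply, ContinuousLinearMap.prod_apply, add_apply,
      smul_apply, ContinuousLinearMap.coe_fst', ContinuousLinearMap.coe_snd', smul_eq_mul,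
      ContinuousLinearMap.id_apply, Prod.mk.injEq] at e1 e2
    have hd := det_neg P hγ (Γ x)
    have hl := lin_pde P (Γ x)
    unfold Lop
    rw [hxx, hxy, hyy, hux, huy]
    dsimp only
    obtain ⟨e11, e12⟩ := e1
    obtain ⟨e21, e22⟩ := e2
    generalize Mpp H H1 H2 (Γ x) = m at *
    generalize Mqq H H1 H2 (Γ x) = o at *
    generalize Mpq H2 (Γ x) = n at *
    generalize (fderiv ℝ Γ x (1,0)).1 = A at *
    generalize (fderiv ℝ Γ x (1,0)).2 = C at *
    generalize (fderiv ℝ Γ x (0,1)).1 = B at *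
    generalize (fderiv ℝ Γ x (0,1)).2 = D at *
    have hA : A = o / (m*o-n*n) := by
      rw [eq_div_iff hd]; linear_combination o * e11 - n * e12
    have hB : B = -n / (m*o-n*n) := by
      rw [eq_div_iff hd]; linear_combination o * e21 - n * e22
    have hD : D = m / (m*o-n*n) := by
      rw [eq_div_iff hd]; linear_combination m * e22 - n * e21
    rw [hA, hB, hD]
    linear_combination (m*o-n*n)⁻¹ * hl
  · rintro ⟨a, b, c, habc⟩
    have hu' : u = fun x => a * x.1 + b * x.2 + c := by
      funext x; exact habc x.1 x.2
    have hd : ∀ x, HasFDerivAt u (a • ContinuousLinearMap.fst ℝ ℝ ℝ + b • ContinuousLinearMap.snd ℝ ℝ ℝ) x := by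
      intro x
      rw [hu']
      exact ((hasFDerivAt_fst.const_mul a).add (hasFDerivAt_snd.const_mul b)).add_const c
    have hc : ∀ x, Γ x = (a, b) := by
      intro x
      have := (hud x).unique (hd x)
      have e1 := congrArg (fun L => L ((1:ℝ),(0:ℝ))) this
      have e2 := congrArg (fun L => L ((0:ℝ),(1:ℝ))) this
      simp at e1 e2
      ext <;> assumption
    have h1 := hΓG (a+1, b)
    rw [hc] at h1
    simp at h1

end core

section series

/-- A positive sequence with consecutive ratios tending to one. -/
structure GoodSeq (c : ℕ → ℝ) : Prop where
  pos : ∀ n, 0 < c n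
  ratio : Tendsto (fun n => c (n+1) / c n) atTop (𝓝 1)

/-- Coefficients of the derivative. -/
def dseq (c : ℕ → ℝ) (n : ℕ) : ℝ := (n + 1) * c (n + 1)

noncomputable def psum (c : ℕ → ℝ) (t : ℝ) : ℝ := ∑' n, c n * t ^ n

lemma GoodSeq.dseq {c : ℕ → ℝ} (h : GoodSeq c) : GoodSeq (dseq c) := by
  refine ⟨fun n => mul_pos (by positivity) (h.pos _), ?_⟩
  have h1 : Tendsto (fun n : ℕ => ((n:ℝ) + 2) / (n + 1)) atTop (𝓝 1) := by
    have := tendsto_add_mul_div_add_mul_atTop_nhds (𝕜 := ℝ) 2 1 1 (d := 1) one_ne_zero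
    simp only [one_mul, div_one] at this
    refine this.congr (fun n => ?_)
    rw [add_comm, add_comm (1:ℝ)]
  have h2 := h1.mul ((tendsto_add_atTop_iff_nat 1).mpr h.ratio)
  rw [one_mul] at h2
  refine h2.congr (fun n => ?_)
  have := (h.pos (n+1)).ne'
  unfold _root_.dseq
  push_cast
  have : (n:ℝ) + 1 ≠ 0 := by positivity
  field_simp
  ring

lemma GoodSeq.summable {c : ℕ → ℝ} (h : GoodSeq c) {t : ℝ} (ht : |t| < 1) :
    Summable (fun n => c n * t ^ n) := by
  by_cases h0 : t = 0
  · subst h0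
    refine summable_of_ne_finset_zero (s := {0}) (fun n hn => ?_)
    have : n ≠ 0 := by simpa using hn
    simp [this]
  refine summable_of_ratio_test_tendsto_lt_one ht
    (Eventually.of_forall fun n => mul_ne_zero (h.pos n).ne' (pow_ne_zero _ h0)) ?_
  have := h.ratio.mul_const |t|
  rw [one_mul] at this
  refine this.congr (fun n => ?_)
  rw [norm_mul, norm_mul, norm_pow, norm_pow, Real.norm_eq_abs, Real.norm_eq_abs, Real.norm_eq_abs,
    abs_of_pos (h.pos _), abs_of_pos (h.pos _)]
  have h1 : |t| ≠ 0 := by simpa using h0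
  have := (h.pos n).ne'
  field_simp
  ring

lemma GoodSeq.hasSum {c : ℕ → ℝ} (h : GoodSeq c) {t : ℝ} (ht : |t| < 1) :
    HasSum (fun n => c n * t ^ n) (psum c t) := (h.summable ht).hasSum

/-- The derivative series multiplied by t. -/
lemma GoodSeq.hasSum_mul {c : ℕ → ℝ} (h : GoodSeq c) {t : ℝ} (ht : |t| < 1) :
    HasSum (fun n : ℕ => (n:ℝ) * c n * t ^ n) (t * psum (_root_.dseq c) t) := by
  have h1 := (h.dseq.hasSum ht).mul_left t
  have h2 : HasSum (fun n : ℕ => ((n+1:ℕ):ℝ) * c (n+1) * t ^ (n+1)) (t * psum (_root_.dseq c) t) := by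
    refine h1.congr_fun ?_ |> id
    intro n
    unfold _root_.dseq
    push_cast
    ring
  have := (hasSum_nat_add_iff (f := fun n : ℕ => (n:ℝ) * c n * t ^ n) 1).mp h2
  simpa using this

lemma GoodSeq.hasDerivAt {c : ℕ → ℝ} (h : GoodSeq c) {t : ℝ} (ht : |t| < 1) :
    HasDerivAt (psum c) (psum (_root_.dseq c) t) t := by
  obtain ⟨r, hr1, hr2⟩ := exists_between ht
  have hr0 : 0 < r := (abs_nonneg t).trans_lt hr1
  have hsum : Summable (fun n : ℕ => (n:ℝ) * c n * r ^ (n-1)) := by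
    have := (h.hasSum_mul (t := r) (by rwa [abs_of_pos hr0])).summable.mul_left r⁻¹
    refine this.congr (fun n => ?_)
    rcases n with _ | n
    · simp
    · rw [Nat.add_sub_cancel, pow_succ]; field_simp
  have hd := hasDerivAt_tsum_of_isPreconnected (g := fun n y => c n * y ^ n)
    (g' := fun n y => c n * ((n:ℝ) * y ^ (n-1))) (t := Metric.ball 0 r) (y₀ := 0) (y := t) hsum Metric.isOpen_ball
    (convex_ball _ _).isPreconnected (fun n y _ => (hasDerivAt_pow n y).const_mul _)
    (fun n y hy => ?_) (Metric.mem_ball_self hr0) (h.summable (by simp)) (by simpa using hr1)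
  · convert! hd using 1
    have hs2 : Summable (fun n => c n * ((n:ℝ) * t ^ (n-1))) := by
      refine Summable.of_norm_bounded hsum (fun n => ?_)
      rw [norm_mul, norm_mul, norm_pow, Real.norm_eq_abs, Real.norm_eq_abs, Real.norm_eq_abs,
        abs_of_pos (h.pos n), Nat.abs_cast, mul_comm (n:ℝ) (c n), mul_assoc]
      have := (h.pos n).le
      gcongr
    rw [hs2.tsum_eq_zero_add]
    simp only [psum, _root_.dseq]
    simp
    refine tsum_congr (fun n => ?_)
    ring
  · have hy' : |y| < r := by simpa using hy
    rw [norm_mul, norm_mul, norm_pow, Real.norm_eq_abs, Real.norm_eq_abs, Real.norm_eq_abs,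
        abs_of_pos (h.pos n), Nat.abs_cast, mul_comm (n:ℝ) (c n), mul_assoc]
    have := (h.pos n).le
    gcongr

lemma GoodSeq.psum_ge {c : ℕ → ℝ} (h : GoodSeq c) {t : ℝ} (ht : |t| < 1) (h0 : 0 ≤ t) :
    c 0 ≤ psum c t := by
  have := (h.summable ht).le_tsum 0 (fun n _ => mul_nonneg (h.pos n).le (pow_nonneg h0 n))
  simpa [psum] using this

/-- Hypergeometric coefficients with third parameter `3`. -/
noncomputable def hseq (a b : ℝ) : ℕ → ℝ
  | 0 => 1
  | n+1 => hseq a b n * ((n + a) * (n + b) / ((n + 3) * (n + 1)))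

lemma hseq_good {a b : ℝ} (ha : 0 < a) (hb : 0 < b) : GoodSeq (hseq a b) := by
  have hpos : ∀ n, 0 < hseq a b n := by
    intro n
    induction n with
    | zero => simp [hseq]
    | succ n ih => rw [hseq]; positivity
  refine ⟨hpos, ?_⟩
  have h1 : ∀ x y : ℝ, Tendsto (fun n : ℕ => ((n:ℝ) + x) / (n + y)) atTop (𝓝 1) := by
    intro x y
    have := tendsto_add_mul_div_add_mul_atTop_nhds (𝕜 := ℝ) x y 1 (d := 1) one_ne_zero
    simp only [one_mul, div_one] at this
    refine this.congr (fun n => ?_)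
    rw [add_comm, add_comm y]
  have h2 := (h1 a 3).mul (h1 b 1)
  rw [one_mul] at h2
  refine h2.congr (fun n => ?_)
  rw [hseq, mul_div_cancel_left₀ _ (hpos n).ne', div_mul_div_comm]

lemma hseq_ode {a b : ℝ} (ha : 0 < a) (hb : 0 < b) {t : ℝ} (ht : |t| < 1) :
    t * (1 - t) * psum (dseq (dseq (hseq a b))) t + (3 - (a + b + 1) * t) * psum (dseq (hseq a b)) t
      - a * b * psum (hseq a b) t = 0 := by
  have h := hseq_good ha hb
  set c := hseq a b with hc
  have s0 := (h.hasSum ht).mul_left (a*b)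
  have s1 := (h.dseq.hasSum ht).mul_left 3
  have s2 := (h.hasSum_mul ht).mul_left (a + b + 1)
  have s3 := h.dseq.hasSum_mul ht
  have s4 : HasSum (fun n : ℕ => (n:ℝ) * (n - 1) * c n * t ^ n) (t * (t * psum (dseq (dseq c)) t)) := by
    have h2 : HasSum (fun n : ℕ => ((n+1:ℕ):ℝ) * ((n+1:ℕ) - 1) * c (n+1) * t ^ (n+1)) (t * (t * psum (dseq (dseq c)) t)) := by
      refine (s3.mul_left t).congr_fun ?_ |> id
      intro n
      unfold dseq
      push_cast
      ring
    have := (hasSum_nat_add_iff (f := fun n : ℕ => (n:ℝ) * (n-1) * c n * t ^ n) 1).mp h2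
    simpa using this
  have := (((s3.sub s4).add s1).sub s2).sub s0
  have hz : ∀ n : ℕ, ((n:ℝ) * dseq c n * t ^ n - (n:ℝ) * (n - 1) * c n * t ^ n + 3 * (dseq c n * t ^ n)
      - (a+b+1) * ((n:ℝ) * c n * t ^ n) - a * b * (c n * t ^ n)) = 0 := by
    intro n
    unfold dseq
    have : c (n+1) = c n * ((n + a) * (n + b) / ((n + 3) * (n + 1))) := by rw [hc, hseq]
    rw [this]
    have : (n:ℝ) + 1 ≠ 0 := by positivity
    have : (n:ℝ) + 3 ≠ 0 := by positivity
    field_simp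
    ring
  rw [funext hz] at this
  have h0 := this.unique hasSum_zero
  linear_combination h0

end series

section hyp

noncomputable def hy0 (a b s : ℝ) : ℝ := (1 + s) ^ (-a) * psum (hseq a b) (s / (1 + s))

noncomputable def hy1 (a b s : ℝ) : ℝ := (1 + s) ^ (-a) *
  (-a / (1 + s) * psum (hseq a b) (s / (1 + s)) + 1 / (1+s)^2 * psum (dseq (hseq a b)) (s / (1 + s)))

noncomputable def hy2 (a b s : ℝ) : ℝ := (1 + s) ^ (-a) *
  (a * (a+1) / (1 + s)^2 * psum (hseq a b) (s / (1 + s))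
    - (2 * a + 2) / (1+s)^3 * psum (dseq (hseq a b)) (s / (1 + s))
    + 1 / (1+s)^4 * psum (dseq (dseq (hseq a b))) (s / (1 + s)))

lemma abs_t_lt {s : ℝ} (hs : 0 ≤ s) : |s / (1 + s)| < 1 := by
  rw [abs_of_nonneg (by positivity), div_lt_one (by positivity)]; linarith

lemma hasDerivAt_E (a : ℝ) {s : ℝ} (hs : 0 ≤ s) :
    HasDerivAt (fun s : ℝ => (1 + s) ^ a) ((1+s)^a * (a / (1+s))) s := by
  have h0 : (1 + s) ≠ 0 := by positivity
  have := ((hasDerivAt_id s).const_add 1).rpow_const (p := a) (Or.inl h0)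
  refine this.congr_deriv ?_
  simp only [id]
  rw [Real.rpow_sub_one h0]
  ring

lemma hasDerivAt_t {s : ℝ} (hs : 0 ≤ s) :
    HasDerivAt (fun s : ℝ => s / (1 + s)) (1 / (1+s)^2) s := by
  have h0 : (1 + s) ≠ 0 := by positivity
  have := (hasDerivAt_id s).div ((hasDerivAt_id s).const_add 1) h0
  refine this.congr_deriv ?_
  simp

lemma hasDerivAt_cinv (k : ℕ) (C : ℝ) {s : ℝ} (hs : 0 ≤ s) :
    HasDerivAt (fun s : ℝ => C / (1 + s)^k) (- (C * k) / (1+s)^(k+1)) s := by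
  have h0 : (1 + s) ≠ 0 := by positivity
  have := (hasDerivAt_const s C).div (((hasDerivAt_id s).const_add 1).pow k) (pow_ne_zero k h0)
  refine this.congr_deriv ?_
  rcases k with _ | k
  · simp
  · simp
    field_simp
    ring

variable {a b : ℝ}

lemma hasDerivAt_ps {c : ℕ → ℝ} (h : GoodSeq c) {s : ℝ} (hs : 0 ≤ s) :
    HasDerivAt (fun s : ℝ => psum c (s / (1+s))) (psum (dseq c) (s / (1+s)) * (1 / (1+s)^2)) s :=
  HasDerivAt.comp (h₂ := psum c) s (h.hasDerivAt (abs_t_lt hs)) (hasDerivAt_t hs)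

lemma hy0_deriv (ha : 0 < a) (hb : 0 < b) {s : ℝ} (hs : 0 ≤ s) :
    HasDerivAt (hy0 a b) (hy1 a b s) s := by
  have h := hseq_good ha hb
  refine ((hasDerivAt_E (-a) hs).mul (hasDerivAt_ps h hs)).congr_deriv ?_
  unfold hy1
  ring

lemma hy1_deriv (ha : 0 < a) (hb : 0 < b) {s : ℝ} (hs : 0 ≤ s) :
    HasDerivAt (hy1 a b) (hy2 a b s) s := by
  have h := hseq_good ha hb
  have h0 : (1 + s) ≠ 0 := by positivity
  have i1 := hasDerivAt_cinv 1 (-a) hs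
  simp only [pow_one] at i1
  refine ((hasDerivAt_E (-a) hs).mul ((i1.mul (hasDerivAt_ps h hs)).add
    ((hasDerivAt_cinv 2 1 hs).mul (hasDerivAt_ps h.dseq hs)))).congr_deriv ?_
  unfold hy2
  push_cast
  simp only [Pi.add_apply, Pi.mul_apply]
  field_simp
  ring

lemma hy2_cont (ha : 0 < a) (hb : 0 < b) : ContinuousOn (hy2 a b) (Ici 0) := by
  intro s hs
  have hs : 0 ≤ s := hs
  have h := hseq_good ha hb
  exact ((hasDerivAt_E (-a) hs).mul ((((hasDerivAt_cinv 2 (a * (a+1)) hs).mul (hasDerivAt_ps h hs)).sub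
    ((hasDerivAt_cinv 3 (2 * a + 2) hs).mul (hasDerivAt_ps h.dseq hs))).add
    ((hasDerivAt_cinv 4 1 hs).mul (hasDerivAt_ps h.dseq.dseq hs)))).continuousAt.continuousWithinAt

lemma hy_ode {β : ℝ} (ha : 0 < a) (hb : 0 < b) (h1 : β = a - b + 1) (h2 : a * (3 - b) = -β)
    {s : ℝ} (hs : 0 ≤ s) :
    s * (1 + s) * hy2 a b s + (3 + (3 + β) * s) * hy1 a b s - β * hy0 a b s = 0 := by
  have h0 : (1 + s) ≠ 0 := by positivity
  have h := hseq_ode ha hb (abs_t_lt hs)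
  unfold hy0 hy1 hy2
  generalize psum (hseq a b) (s / (1+s)) = F at *
  generalize psum (dseq (hseq a b)) (s / (1+s)) = F1 at *
  generalize psum (dseq (dseq (hseq a b))) (s / (1+s)) = F2 at *
  have key : s * (1+s) * (a * (a+1) / (1 + s)^2 * F - (2 * a + 2) / (1+s)^3 * F1 + 1 / (1+s)^4 * F2)
    + (3 + (3 + β) * s) * (-a / (1 + s) * F + 1 / (1+s)^2 * F1) - β * F = 0 := by
    field_simp at h ⊢
    subst h1
    linear_combination h + (-F * (1+s)^3) * h2
  linear_combination (1+s)^(-a) * key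

lemma hy_pos (ha : 0 < a) (hb : 0 < b) {s : ℝ} (hs : 0 ≤ s) : (1+s)^(-a) ≤ hy0 a b s := by
  have h := (hseq_good ha hb).psum_ge (abs_t_lt hs) (by positivity)
  have h1 : hseq a b 0 = 1 := rfl
  rw [h1] at h
  have : 0 < (1+s)^(-a) := by positivity
  unfold hy0
  nlinarith

lemma hy_posJ {β : ℝ} (ha : 0 < a) (hb : 0 < b) (h1 : β = a - b + 1) (h2 : a * (3 - b) = -β)
    {s : ℝ} (hs : 0 ≤ s) : 0 < hy0 a b s - s * hy1 a b s := by
  have hp : ∀ s : ℝ, 0 ≤ s → 0 < hy0 a b s := fun s hs =>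
    lt_of_lt_of_le (by positivity) (hy_pos ha hb hs)
  rcases hs.eq_or_lt with rfl | hs0
  · simpa using hp 0 le_rfl
  have hd : ∀ s : ℝ, 0 ≤ s → HasDerivAt (fun s : ℝ => s^3 * (1+s)^β * (hy0 a b s - s * hy1 a b s))
      (3 * s^2 * (1+s)^β * hy0 a b s) s := by
    intro s hs
    have h0 : (1 + s) ≠ 0 := by positivity
    refine (((hasDerivAt_pow 3 s).mul (hasDerivAt_E β hs)).mul ((hy0_deriv ha hb hs).sub
      ((hasDerivAt_id s).mul (hy1_deriv ha hb hs)))).congr_deriv ?_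
    have ho := hy_ode ha hb h1 h2 hs
    simp only [Pi.sub_apply, Pi.mul_apply, id]
    field_simp
    push_cast
    linear_combination (-s^3) * ho
  have hm : StrictMonoOn (fun s : ℝ => s^3 * (1+s)^β * (hy0 a b s - s * hy1 a b s)) (Ici 0) := by
    apply strictMonoOn_of_deriv_pos (convex_Ici 0)
    · intro s hs
      exact (hd s hs).continuousAt.continuousWithinAt
    · intro s hs
      rw [interior_Ici] at hs
      have hs : 0 < s := hs
      rw [(hd s hs.le).deriv]
      have := hp s hs.le
      positivity
  have := hm (mem_Ici.mpr le_rfl) (mem_Ici.mpr hs) hs0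
  simp only [ne_eq, OfNat.ofNat_ne_zero, not_false_eq_true, zero_pow, zero_mul] at this
  have hq : 0 < s^3 * (1+s)^β := by positivity
  exact (pos_iff_pos_of_mul_pos this).mp hq

lemma hy_pos1 {β : ℝ} (ha : 0 < a) (hb : 0 < b) (h1 : β = a - b + 1) (h2 : a * (3 - b) = -β)
    (hβ : 0 < β) {s : ℝ} (hs : 0 ≤ s) : 0 ≤ s * hy1 a b s := by
  have hp : ∀ s : ℝ, 0 ≤ s → 0 < hy0 a b s := fun s hs =>
    lt_of_lt_of_le (by positivity) (hy_pos ha hb hs)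
  rcases hs.eq_or_lt with rfl | hs0
  · simp
  have hd : ∀ s : ℝ, 0 ≤ s → HasDerivAt (fun s : ℝ => s^3 * (1+s)^β * hy1 a b s)
      (β * s^2 * (1+s)^β / (1+s) * hy0 a b s) s := by
    intro s hs
    have h0 : (1 + s) ≠ 0 := by positivity
    refine (((hasDerivAt_pow 3 s).mul (hasDerivAt_E β hs)).mul (hy1_deriv ha hb hs)).congr_deriv ?_
    have ho := hy_ode ha hb h1 h2 hs
    simp only [Pi.mul_apply]
    field_simp
    push_cast
    linear_combination (s^2) * ho
  have hm : StrictMonoOn (fun s : ℝ => s^3 * (1+s)^β * hy1 a b s) (Ici 0) := by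
    apply strictMonoOn_of_deriv_pos (convex_Ici 0)
    · intro s hs
      exact (hd s hs).continuousAt.continuousWithinAt
    · intro s hs
      rw [interior_Ici] at hs
      have hs : 0 < s := hs
      rw [(hd s hs.le).deriv]
      have := hp s hs.le
      positivity
  have := hm (mem_Ici.mpr le_rfl) (mem_Ici.mpr hs) hs0
  simp only [ne_eq, OfNat.ofNat_ne_zero, not_false_eq_true, zero_pow, zero_mul] at this
  have hq : 0 < s^3 * (1+s)^β := by positivity
  have := (pos_iff_pos_of_mul_pos this).mp hq
  positivity

lemma hy_ge_one {β : ℝ} (ha : 0 < a) (hb : 0 < b) (h1 : β = a - b + 1) (h2 : a * (3 - b) = -β)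
    (hβ : 0 < β) {s : ℝ} (hs : 0 ≤ s) : 1 ≤ hy0 a b s := by
  have hm : MonotoneOn (hy0 a b) (Ici 0) := by
    apply monotoneOn_of_deriv_nonneg (convex_Ici 0)
    · intro s hs
      exact (hy0_deriv ha hb hs).continuousAt.continuousWithinAt
    · intro s hs
      rw [interior_Ici] at hs
      exact (hy0_deriv ha hb (le_of_lt hs)).differentiableAt.differentiableWithinAt
    · intro s hs
      rw [interior_Ici] at hs
      have hs : 0 < s := hs
      rw [(hy0_deriv ha hb hs.le).deriv]
      have := hy_pos1 ha hb h1 h2 hβ hs.le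
      exact nonneg_of_mul_nonneg_right this hs
  have h3 := hm (mem_Ici.mpr le_rfl) (mem_Ici.mpr hs) hs
  have h4 := hy_pos ha hb (le_refl (0:ℝ))
  simp at h4
  linarith

lemma hy_posK (ha : 0 < a) (hb : 0 < b) (ha' : a < 1/2) {s : ℝ} (hs : 0 ≤ s) :
    0 < hy0 a b s + 2 * s * hy1 a b s := by
  have h := hseq_good ha hb
  have f0 := h.psum_ge (abs_t_lt hs) (by positivity)
  have f1 := h.dseq.psum_ge (abs_t_lt hs) (by positivity)
  have p0 := lt_of_lt_of_le (h.pos 0) f0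
  have p1 := lt_of_lt_of_le (h.dseq.pos 0) f1
  have h0 : (1 + s) ≠ 0 := by positivity
  have e : hy0 a b s + 2 * s * hy1 a b s = (1+s)^(-a) * ((1 + (1 - 2 * a) * s) / (1+s) * psum (hseq a b) (s / (1+s))
      + 2 * s / (1+s)^2 * psum (dseq (hseq a b)) (s / (1+s))) := by
    unfold hy0 hy1
    field_simp
    ring
  rw [e]
  have : 0 < 1 + (1 - 2*a) * s := by
    have : 0 ≤ (1 - 2*a) * s := mul_nonneg (by linarith) hs
    linarith
  positivity

lemma hy_grow (ha : 0 < a) (hb : 0 < b) (ha' : a < 1/2) :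
    Tendsto (fun s => s * hy0 a b s ^ 2) atTop atTop := by
  have h1 : Tendsto (fun s : ℝ => 1/2 * (1+s)^(1 - 2 * a)) atTop atTop :=
    ((tendsto_rpow_atTop (by linarith : 0 < 1 - 2*a)).comp
      (tendsto_atTop_add_const_left _ 1 tendsto_id)).const_mul_atTop (by norm_num)
  refine tendsto_atTop_mono' _ ?_ h1
  filter_upwards [eventually_ge_atTop 1] with s hs
  have hs0 : 0 ≤ s := by linarith
  have h2 := hy_pos ha hb hs0
  have h3 : 0 < (1+s)^(-a) := by positivity
  have h4 : ((1+s)^(-a))^2 ≤ hy0 a b s ^2 := pow_le_pow_left₀ h3.le h2 2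
  have h5 : (1+s)^(1 - 2*a) = (1+s) * ((1+s)^(-a))^2 := by
    rw [sq, ← Real.rpow_add (by positivity), ← Real.rpow_one_add' (by positivity) (by linarith)]
    congr 1; ring
  rw [h5]
  have h6 : 0 ≤ ((1+s)^(-a))^2 := by positivity
  nlinarith

end hyp

lemma profile_scale {γ ε κ : ℝ} {H H1 H2 : ℝ → ℝ} (P : Profile γ ε H H1 H2) (hκ : 0 < κ) :
    Profile γ (κ * ε) (fun s => H (s / κ)) (fun s => H1 (s / κ) / κ) (fun s => H2 (s / κ) / κ^2) := by
  have hd : ∀ s, HasDerivAt (fun s : ℝ => s / κ) (1 / κ) s := fun s => (hasDerivAt_id s).div_const κ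
  have hn : ∀ s, 0 ≤ s → 0 ≤ s / κ := fun s hs => by positivity
  refine ⟨?_, ?_, ?_, ?_, ?_, ?_, ?_, ?_⟩
  · intro s hs
    refine ((P.d0 _ (hn s hs)).comp s (hd s)).congr_deriv (by ring)
  · intro s hs
    refine (((P.d1 _ (hn s hs)).comp s (hd s)).div_const κ).congr_deriv (by field_simp)
  · refine ContinuousOn.div_const ?_ _
    exact P.c2.comp (by fun_prop) (fun s hs => hn s hs)
  · intro s hs
    have h := P.ode _ (hn s hs)
    have e : s = κ * (s / κ) := by field_simp
    generalize s / κ = σ at *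
    subst e
    field_simp
    linear_combination h
  · intro s hs
    exact P.pos _ (hn s hs)
  · intro s hs
    have := P.posJ _ (hn s hs)
    convert! this using 2
    ring
  · intro s hs
    have := P.posK _ (hn s hs)
    convert! this using 2
    ring
  · have h1 : Tendsto (fun s : ℝ => s / κ) atTop atTop := tendsto_id.atTop_div_const hκ
    have := (P.grow.comp h1).const_mul_atTop hκ
    refine this.congr (fun s => ?_)
    simp only [Function.comp]
    field_simp

lemma profile_exists (γ ε : ℝ) (h : (1 ≤ γ ∧ 0 < ε) ∨ (γ < -1 ∧ ε < 0)) :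
    ∃ H H1 H2, Profile γ ε H H1 H2 := by
  by_cases hγ : γ = 1
  · subst hγ
    have hε : 0 < ε := by
      rcases h with h | h
      · exact h.2
      · linarith [h.1]
    refine ⟨fun s => 1 + s / (6 * ε), fun _ => 1 / (6*ε), fun _ => 0, ?_, ?_, ?_, ?_, ?_, ?_, ?_, ?_⟩
    · intro s _
      exact ((hasDerivAt_id s).div_const _).const_add 1
    · intro s _
      exact hasDerivAt_const _ _
    · exact continuousOn_const
    · intro s _
      field_simp
      ring
    · intro s hs
      positivity
    · intro s hs
      have : 1 + s / (6 * ε) - s * (1 / (6 * ε)) = 1 := by ring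
      rw [this]; norm_num
    · intro s hs
      positivity
    · refine tendsto_atTop_mono' _ ?_ tendsto_id
      filter_upwards [eventually_ge_atTop 0] with s hs
      have : 1 ≤ 1 + s / (6*ε) := by
        have : 0 ≤ s / (6*ε) := by positivity
        linarith
      simp only [id]
      nlinarith [mul_le_mul this this (by norm_num) (by linarith)]
  · have hg : γ - 1 ≠ 0 := sub_ne_zero.mpr hγ
    have hκ : 0 < 2 * ε / (γ - 1) := by
      rcases h with ⟨h1, h2⟩ | ⟨h1, h2⟩
      · have : 0 < γ - 1 := lt_of_le_of_ne (by linarith) hg.symm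
        positivity
      · exact div_pos_of_neg_of_neg (by linarith) (by linarith)
    suffices ∃ H H1 H2, Profile γ ((γ-1)/2) H H1 H2 by
      obtain ⟨H, H1, H2, P⟩ := this
      have := profile_scale P hκ
      have e : 2 * ε / (γ - 1) * ((γ-1)/2) = ε := by field_simp
      rw [e] at this
      exact ⟨_, _, _, this⟩
    set β := 1 / (γ - 1) with hβ
    have hode : ∀ {a b : ℝ}, 0 < a → 0 < b → β = a - b + 1 → a * (3 - b) = -β → ∀ s, 0 ≤ s →
        s * (2*((γ-1)/2) + (γ-1)*s) * hy2 a b s + (6*((γ-1)/2) + (3*γ-2)*s) * hy1 a b s - hy0 a b s = 0 := by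
      intro a b ha hb h1 h2 s hs
      have := hy_ode ha hb h1 h2 hs
      have e : (γ - 1) * β = 1 := by rw [hβ]; field_simp
      linear_combination (γ - 1) * this + (hy0 a b s - s * hy1 a b s) * e
    have hdisc : 0 ≤ β^2 + 8 * β + 4 := by
      have : -1/2 < β := by
        rcases h with ⟨h1, h2⟩ | ⟨h1, h2⟩
        · have : 0 < γ - 1 := lt_of_le_of_ne (by linarith) hg.symm
          have : 0 < β := by positivity
          linarith
        · rw [hβ, lt_div_iff_of_neg (by linarith)]; linarith
      nlinarith
    set q := Real.sqrt (β^2 + 8 * β + 4) with hq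
    have hq0 : 0 ≤ q := Real.sqrt_nonneg _
    have hqq : q^2 = β^2 + 8 * β + 4 := Real.sq_sqrt hdisc
    rcases h with ⟨h1, h2⟩ | ⟨h1, h2⟩
    · have : 0 < γ - 1 := lt_of_le_of_ne (by linarith) hg.symm
      have hβ0 : 0 < β := by positivity
      have hq1 : 2 + β < q := by nlinarith
      obtain ⟨a, ha⟩ : ∃ a, a = ((2 + β) + q) / 2 := ⟨_, rfl⟩
      obtain ⟨b, hb⟩ : ∃ b, b = 3 - ((2 + β) - q) / 2 := ⟨_, rfl⟩
      have ha0 : 0 < a := by linarith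
      have hb0 : 0 < b := by linarith
      have e1 : β = a - b + 1 := by linarith
      have e2 : a * (3 - b) = -β := by rw [ha, hb]; linear_combination -hqq / 4
      refine ⟨hy0 a b, hy1 a b, hy2 a b, fun s hs => hy0_deriv ha0 hb0 hs, fun s hs => hy1_deriv ha0 hb0 hs,
        hy2_cont ha0 hb0, hode ha0 hb0 e1 e2, fun s hs => ?_, fun s hs => hy_posJ ha0 hb0 e1 e2 hs,
        fun s hs => ?_, ?_⟩
      · linarith [hy_ge_one ha0 hb0 e1 e2 hβ0 hs]
      · linarith [hy_ge_one ha0 hb0 e1 e2 hβ0 hs, hy_pos1 ha0 hb0 e1 e2 hβ0 hs]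
      · refine tendsto_atTop_mono' _ ?_ tendsto_id
        filter_upwards [eventually_ge_atTop 0] with s hs
        have := hy_ge_one ha0 hb0 e1 e2 hβ0 hs
        simp only [id]
        nlinarith [mul_le_mul this this (by norm_num) (by linarith)]
    · have hβ1 : -1/2 < β := by
        rw [hβ, lt_div_iff_of_neg (by linarith)]; linarith
      have hβ0 : β < 0 := by
        rw [hβ]; exact div_neg_of_pos_of_neg (by norm_num) (by linarith)
      have hq1 : q < 2 + β := by nlinarith
      have hq2 : 1 + β < q := by nlinarith
      obtain ⟨a, ha⟩ : ∃ a, a = ((2 + β) - q) / 2 := ⟨_, rfl⟩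
      obtain ⟨b, hb⟩ : ∃ b, b = 3 - ((2 + β) + q) / 2 := ⟨_, rfl⟩
      have ha0 : 0 < a := by linarith
      have ha1 : a < 1/2 := by linarith
      have hb0 : 0 < b := by linarith
      have e1 : β = a - b + 1 := by linarith
      have e2 : a * (3 - b) = -β := by rw [ha, hb]; linear_combination -hqq / 4
      refine ⟨hy0 a b, hy1 a b, hy2 a b, fun s hs => hy0_deriv ha0 hb0 hs, fun s hs => hy1_deriv ha0 hb0 hs,
        hy2_cont ha0 hb0, hode ha0 hb0 e1 e2, fun s hs => ?_, fun s hs => hy_posJ ha0 hb0 e1 e2 hs,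
        fun s hs => hy_posK ha0 hb0 ha1 hs, hy_grow ha0 hb0 ha1⟩
      exact lt_of_lt_of_le (by positivity) (hy_pos ha0 hb0 hs)

/-- For `(γ ≥ 1, ε > 0)` or `(γ < −1, ε < 0)` the equation `L_{γ,ε}[u] = 0` admits an
entire non-linear `C²` solution, i.e. it does not have the Bernstein property. -/
theorem Lop_not_bernstein (γ ε : ℝ)
    (h : (1 ≤ γ ∧ 0 < ε) ∨ (γ < -1 ∧ ε < 0)) :
    ∃ u : ℝ × ℝ → ℝ, ContDiff ℝ 2 u ∧
      (∀ p : ℝ × ℝ, Lop γ ε u p = 0) ∧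
      ¬ ∃ a b c : ℝ, ∀ x y : ℝ, u (x, y) = a * x + b * y + c := by
  obtain ⟨H, H1, H2, P⟩ := profile_exists γ ε h
  exact main_of_profile P h
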